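/- (Strict positivity of the Bopp–Podolsky energy on its finiteness domain.) Let K : ℝ³ → ℝ be defined by K(x) = (1 - exp(-‖x‖))/‖x‖ for x ≠ 0 and K(0) = 1, and set V(f,f) = ∫_{ℝ³}∫_{ℝ³} K(x-y) f(x) f(y) dx dy. If f : ℝ³ → ℝ is measurable, not almost everywhere zero, and satisfies V(|f|,|f|) < ∞, then V(f,f) > 0. -/

import Mathlib

open MeasureTheory Real
open scoped ENNReal Classical

noncomputable section

abbrev E3 := EuclideanSpace ℝ (Fin 3)

/-- Bopp–Podolsky kernel with `a = 1`. -/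
def K1 (x : E3) : ℝ := if x = 0 then 1 else (1 - Real.exp (-‖x‖)) / ‖x‖

/-- Laplacian of `f` at `x`: sum of second derivatives along the coordinate directions. -/
def lap (f : E3 → ℝ) (x : E3) : ℝ :=
  ∑ i : Fin 3, fderiv ℝ (fun y => fderiv ℝ f y (EuclideanSpace.single i 1)) x
    (EuclideanSpace.single i 1)

/-- Bopp–Podolsky energy as an iterated lower integral, valued in `[0,∞]`. -/
def Vlin (f g : E3 → ℝ) : ℝ≥0∞ :=
  ∫⁻ x, ∫⁻ y, ENNReal.ofReal (K1 (x - y) * f x * g y)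

/-- Bopp–Podolsky energy as an iterated Bochner integral. -/
def Vr (f g : E3 → ℝ) : ℝ := ∫ x, ∫ y, K1 (x - y) * f x * g y

/-- `G` is the weak gradient of `u`. -/
def IsWeakGradient (u : E3 → ℝ) (G : E3 → E3) : Prop :=
  ∀ φ : E3 → ℝ, ContDiff ℝ (⊤ : ℕ∞) φ → HasCompactSupport φ → ∀ i : Fin 3,
    ∫ x, u x * fderiv ℝ φ x (EuclideanSpace.single i 1) = -∫ x, G x i * φ x

/-- `h` is the weak Laplacian of `u`. -/
def IsWeakLaplacian (u : E3 → ℝ) (h : E3 → ℝ) : Prop :=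
  ∀ φ : E3 → ℝ, ContDiff ℝ (⊤ : ℕ∞) φ → HasCompactSupport φ →
    ∫ x, u x * lap φ x = ∫ x, h x * φ x


open Set in
/-- Cauchy–Schlömilch substitution. -/
lemma bp_schlomilch (r b : ℝ) (hr : 0 < r) (hb : 0 < b) :
    IntegrableOn (fun u : ℝ => Real.exp (-(r * u - b / u) ^ 2)) (Ioi 0) ∧
    ∫ u in Ioi (0:ℝ), Real.exp (-(r * u - b / u) ^ 2) = √π / (2 * r) := by
  have hder : ∀ u ∈ Ioi (0:ℝ), HasDerivWithinAt (fun u : ℝ => r * u - b / u) (r + b / u ^ 2)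
      (Ioi 0) u := by
    intro u hu
    have hu' : u ≠ 0 := ne_of_gt hu
    have h1 : HasDerivAt (fun u : ℝ => r * u - b * u⁻¹) (r * 1 - b * (-(u ^ 2)⁻¹)) u :=
      ((hasDerivAt_id u).const_mul r).sub ((hasDerivAt_inv hu').const_mul b)
    have h2 : HasDerivAt (fun u : ℝ => r * u - b / u) (r + b / u ^ 2) u := by
      convert h1 using 1
      · ext v
        ring
      · ring
    exact h2.hasDerivWithinAt
  have hinj : InjOn (fun u : ℝ => r * u - b / u) (Ioi 0) := by
    intro u hu v hv h
    have hu' : 0 < u := hu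
    have hv' : 0 < v := hv
    have h' : r * u - b / u = r * v - b / v := h
    have h3 : (u - v) * (r + b / (u * v)) = 0 := by
      have : (u - v) * (r + b / (u * v)) = (r * u - b / u) - (r * v - b / v) := by
        field_simp
        ring
      rw [this, h']; ring
    rcases mul_eq_zero.1 h3 with h4 | h4
    · linarith
    · have : 0 < r + b / (u * v) := by positivity
      linarith
  have himg : (fun u : ℝ => r * u - b / u) '' (Ioi 0) = univ := by
    apply eq_univ_of_forall
    intro y
    have hs : 0 ≤ y ^ 2 + 4 * r * b := by positivity
    have hlt : |y| < √(y ^ 2 + 4 * r * b) := by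
      apply Real.lt_sqrt_of_sq_lt
      rw [sq_abs]; nlinarith [mul_pos hr hb]
    have hpos : 0 < y + √(y ^ 2 + 4 * r * b) := by
      have := neg_abs_le y
      linarith
    refine ⟨(y + √(y ^ 2 + 4 * r * b)) / (2 * r), by simp only [mem_Ioi]; positivity, ?_⟩
    have hsq := Real.sq_sqrt hs
    set s := √(y ^ 2 + 4 * r * b)
    have : y + s ≠ 0 := hpos.ne'
    field_simp
    nlinarith
  have hg : Integrable (fun v : ℝ => Real.exp (-v ^ 2)) := by
    simpa using integrable_exp_neg_mul_sq (b := 1) one_pos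
  have hI : ∫ v : ℝ, Real.exp (-v ^ 2) = √π := by
    simpa using integral_gaussian 1
  have e1 := integral_image_eq_integral_abs_deriv_smul measurableSet_Ioi hder hinj
    (fun v => Real.exp (-v ^ 2))
  have i1 := (integrableOn_image_iff_integrableOn_abs_deriv_smul measurableSet_Ioi hder hinj
    (fun v => Real.exp (-v ^ 2))).1 (by rw [himg]; exact hg.integrableOn)
  rw [himg, setIntegral_univ, hI] at e1
  have i2 : IntegrableOn (fun u : ℝ => Real.exp (-(r * u - b / u) ^ 2)) (Ioi 0) := by
    refine Integrable.mono' (i1.const_mul r⁻¹) ?_ ?_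
    · exact Measurable.aestronglyMeasurable (by fun_prop)
    · refine (ae_restrict_iff' measurableSet_Ioi).2 (ae_of_all _ fun u hu => ?_)
      have hu' : 0 < u := hu
      have : 0 < r + b / u ^ 2 := by positivity
      rw [Real.norm_eq_abs, Real.abs_exp, smul_eq_mul, abs_of_pos this, ← mul_assoc]
      have : 1 ≤ r⁻¹ * (r + b / u ^ 2) := by
        rw [mul_add, inv_mul_cancel₀ hr.ne']
        have : 0 < r⁻¹ * (b / u ^ 2) := by positivity
        linarith
      nlinarith [Real.exp_pos (-(r * u - b / u) ^ 2)]
  refine ⟨i2, ?_⟩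
  have hder2 : ∀ u ∈ Ioi (0:ℝ), HasDerivWithinAt (fun u : ℝ => (b / r) / u) (-((b / r) / u ^ 2))
      (Ioi 0) u := by
    intro u hu
    have hu' : u ≠ 0 := ne_of_gt hu
    have h1 : HasDerivAt (fun u : ℝ => (b / r) * u⁻¹) ((b / r) * (-(u ^ 2)⁻¹)) u :=
      (hasDerivAt_inv hu').const_mul _
    have h2 : HasDerivAt (fun u : ℝ => (b / r) / u) (-((b / r) / u ^ 2)) u := by
      convert h1 using 1
      · ext v
        ring
      · ring
    exact h2.hasDerivWithinAt
  have hinj2 : InjOn (fun u : ℝ => (b / r) / u) (Ioi 0) := by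
    intro u hu v hv h
    have hu' : 0 < u := hu
    have hv' : 0 < v := hv
    have h' : (b / r) / u = (b / r) / v := h
    field_simp at h'
    exact h'.symm
  have himg2 : (fun u : ℝ => (b / r) / u) '' (Ioi 0) = Ioi 0 := by
    ext y
    constructor
    · rintro ⟨u, hu, rfl⟩
      have hu' : 0 < u := hu
      simp only [mem_Ioi]; positivity
    · intro hy
      have hy' : 0 < y := hy
      refine ⟨(b / r) / y, by simp only [mem_Ioi]; positivity, ?_⟩
      field_simp
  have e2 := integral_image_eq_integral_abs_deriv_smul measurableSet_Ioi hder2 hinj2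
    (fun u : ℝ => Real.exp (-(r * u - b / u) ^ 2))
  rw [himg2] at e2
  set J := ∫ u in Ioi (0:ℝ), Real.exp (-(r * u - b / u) ^ 2) with hJ
  have e3 : ∫ u in Ioi (0:ℝ), |r + b / u ^ 2| • Real.exp (-(r * u - b / u) ^ 2)
      = ∫ u in Ioi (0:ℝ), (r * Real.exp (-(r * u - b / u) ^ 2) +
        r * (|-((b / r) / u ^ 2)| • Real.exp (-(r * (b / r / u) - b / (b / r / u)) ^ 2))) := by
    apply setIntegral_congr_fun measurableSet_Ioi
    intro u hu
    have hu' : 0 < u := hu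
    have h5 : 0 < r + b / u ^ 2 := by positivity
    have h6 : 0 < b / r / u ^ 2 := by positivity
    have h7 : (r * (b / r / u) - b / (b / r / u)) ^ 2 = (r * u - b / u) ^ 2 := by
      field_simp
      ring
    simp only [smul_eq_mul, abs_neg, abs_of_pos h5, abs_of_pos h6, h7]
    field_simp
  have i3 := (integrableOn_image_iff_integrableOn_abs_deriv_smul measurableSet_Ioi hder2 hinj2
    (fun u : ℝ => Real.exp (-(r * u - b / u) ^ 2))).1 (by rw [himg2]; exact i2)
  rw [e3, integral_add (i2.const_mul r) (Integrable.const_mul i3 r), integral_const_mul,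
    integral_const_mul, ← e2, ← hJ] at e1
  rw [e1]
  field_simp
  ring

/-- the weight -/
def bpw (u : ℝ) : ℝ := (2 / √π) * (1 - Real.exp (-(1 / 2 / u) ^ 2))

open Set in
lemma bp_kernel (r : ℝ) (hr : 0 < r) :
    ENNReal.ofReal ((1 - Real.exp (-r)) / r) =
      ∫⁻ u in Ioi (0:ℝ), ENNReal.ofReal (bpw u * Real.exp (-u ^ 2 * r ^ 2)) := by
  obtain ⟨i1, e1⟩ := bp_schlomilch r (1 / 2) hr (by norm_num)
  have hr2 : 0 < r ^ 2 := by positivity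
  have i0 : IntegrableOn (fun u : ℝ => Real.exp (-(r ^ 2) * u ^ 2)) (Ioi 0) :=
    (integrable_exp_neg_mul_sq hr2).integrableOn
  have e0 := integral_gaussian_Ioi (r ^ 2)
  have key : ∀ u ∈ Ioi (0:ℝ), bpw u * Real.exp (-u ^ 2 * r ^ 2) =
      (2 / √π) * (Real.exp (-(r ^ 2) * u ^ 2)
        - Real.exp (-r) * Real.exp (-(r * u - 1 / 2 / u) ^ 2)) := by
    intro u hu
    have hu' : 0 < u := hu
    have h1 : Real.exp (-r) * Real.exp (-(r * u - 1 / 2 / u) ^ 2) =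
        Real.exp (-(1 / 2 / u) ^ 2) * Real.exp (-u ^ 2 * r ^ 2) := by
      rw [← Real.exp_add, ← Real.exp_add]
      congr 1
      field_simp
      ring
    rw [h1, bpw, show -(r ^ 2) * u ^ 2 = -u ^ 2 * r ^ 2 by ring]
    ring
  have hintg : IntegrableOn (fun u => bpw u * Real.exp (-u ^ 2 * r ^ 2)) (Ioi 0) := by
    have : IntegrableOn (fun u => (2 / √π) * (Real.exp (-(r ^ 2) * u ^ 2)
        - Real.exp (-r) * Real.exp (-(r * u - 1 / 2 / u) ^ 2))) (Ioi 0) :=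
      Integrable.const_mul (Integrable.sub i0 (i1.const_mul _)) _
    exact this.congr_fun (fun u hu => (key u hu).symm) measurableSet_Ioi
  rw [← ofReal_integral_eq_lintegral_ofReal hintg]
  · congr 1
    rw [setIntegral_congr_fun measurableSet_Ioi key, integral_const_mul,
      integral_sub i0 (i1.const_mul _), integral_const_mul, e0, e1,
      Real.sqrt_div pi_pos.le, Real.sqrt_sq hr.le]
    have : √π ≠ 0 := by positivity
    field_simp
  · refine (ae_of_all _ fun u => ?_)
    have : Real.exp (-(1 / 2 / u) ^ 2) ≤ 1 := by
      rw [Real.exp_le_one_iff]; nlinarith [sq_nonneg (1 / 2 / u)]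
    have h2 : 0 ≤ 1 - Real.exp (-(1 / 2 / u) ^ 2) := by linarith
    simp only [Pi.zero_apply, bpw]
    positivity

/-- Abstract positivity: a kernel that is a superposition of squares. -/
lemma bp_abstract {X Q : Type*} [MeasurableSpace X] [MeasurableSpace Q] (μ : Measure X)
    (ν : Measure Q) [SigmaFinite μ] [SigmaFinite ν] (k : Q → X → ℝ)
    (hk : Measurable (Function.uncurry k)) (hk0 : ∀ q x, 0 ≤ k q x)
    (K : X → X → ℝ) (hK0 : ∀ x y, 0 ≤ K x y) (hKm : Measurable (Function.uncurry K))
    (hK : ∀ᵐ p ∂(μ.prod μ), ENNReal.ofReal (K p.1 p.2) =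
      ∫⁻ q, ENNReal.ofReal (k q p.1 * k q p.2) ∂ν)
    (f : X → ℝ) (hf : Measurable f)
    (hV : ∫⁻ x, ∫⁻ y, ENNReal.ofReal (K x y * |f x| * |f y|) ∂μ ∂μ < ⊤)
    (hle : ∫ x, ∫ y, K x y * f x * f y ∂μ ∂μ ≤ 0) :
    ∀ᵐ q ∂ν, ∫ x, k q x * f x ∂μ = 0 := by
  have hKm' : Measurable (fun p : X × X => K p.1 p.2) := hKm
  have hGm : Measurable (fun z : (X × X) × Q => (k z.2 z.1.1 * f z.1.1) * (k z.2 z.1.2 * f z.1.2)) := by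
    have h1 : Measurable (fun z : (X × X) × Q => k z.2 z.1.1) :=
      hk.comp (measurable_snd.prodMk (measurable_fst.comp measurable_fst))
    have h2 : Measurable (fun z : (X × X) × Q => k z.2 z.1.2) :=
      hk.comp (measurable_snd.prodMk (measurable_snd.comp measurable_fst))
    exact (h1.mul (hf.comp (measurable_fst.comp measurable_fst))).mul
      (h2.mul (hf.comp (measurable_snd.comp measurable_fst)))
  have hV2 : ∫⁻ p : X × X, ENNReal.ofReal (K p.1 p.2 * |f p.1| * |f p.2|) ∂(μ.prod μ) < ⊤ := by
    rw [lintegral_prod _ (by fun_prop)]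
    exact hV
  have hin : ∀ᵐ p ∂(μ.prod μ),
      ∫⁻ q, ‖(k q p.1 * f p.1) * (k q p.2 * f p.2)‖ₑ ∂ν =
        ENNReal.ofReal (K p.1 p.2 * |f p.1| * |f p.2|) := by
    filter_upwards [hK] with p hp
    have : ∀ q, ‖(k q p.1 * f p.1) * (k q p.2 * f p.2)‖ₑ =
        ENNReal.ofReal (k q p.1 * k q p.2) * ENNReal.ofReal (|f p.1| * |f p.2|) := by
      intro q
      rw [← ENNReal.ofReal_mul (mul_nonneg (hk0 _ _) (hk0 _ _)), ← ofReal_norm]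
      congr 1
      simp only [norm_mul, Real.norm_eq_abs, abs_of_nonneg (hk0 _ _)]
      ring
    simp_rw [this]
    rw [lintegral_mul_const'' _ (by
      apply Measurable.aemeasurable
      apply Measurable.ennreal_ofReal
      exact (hk.comp (measurable_id.prodMk measurable_const)).mul
        (hk.comp (measurable_id.prodMk measurable_const))), ← hp,
      ← ENNReal.ofReal_mul (hK0 _ _), mul_assoc]
  have hGi : Integrable (fun z : (X × X) × Q =>
      (k z.2 z.1.1 * f z.1.1) * (k z.2 z.1.2 * f z.1.2)) ((μ.prod μ).prod ν) := by
    refine ⟨hGm.aestronglyMeasurable, ?_⟩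
    rw [hasFiniteIntegral_iff_enorm, lintegral_prod _ hGm.enorm.aemeasurable]
    rw [lintegral_congr_ae hin]
    exact hV2
  have hKi : Integrable (fun p : X × X => K p.1 p.2 * f p.1 * f p.2) (μ.prod μ) := by
    refine ⟨Measurable.aestronglyMeasurable (by fun_prop), ?_⟩
    rw [hasFiniteIntegral_iff_enorm]
    refine lt_of_le_of_lt (le_of_eq ?_) hV2
    apply lintegral_congr
    intro p
    rw [← ofReal_norm]
    simp only [norm_mul, Real.norm_eq_abs, abs_of_nonneg (hK0 _ _)]
  have e1 : ∫ x, ∫ y, K x y * f x * f y ∂μ ∂μ =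
      ∫ p : X × X, K p.1 p.2 * f p.1 * f p.2 ∂(μ.prod μ) := (integral_prod _ hKi).symm
  have e2 : ∫ p : X × X, K p.1 p.2 * f p.1 * f p.2 ∂(μ.prod μ) =
      ∫ p : X × X, ∫ q, (k q p.1 * f p.1) * (k q p.2 * f p.2) ∂ν ∂(μ.prod μ) := by
    apply integral_congr_ae
    filter_upwards [hK] with p hp
    have h1 : ∀ q, (k q p.1 * f p.1) * (k q p.2 * f p.2) = (k q p.1 * k q p.2) * (f p.1 * f p.2) := by
      intro q; ring
    simp_rw [h1]
    rw [integral_mul_const, integral_eq_lintegral_of_nonneg_ae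
      (ae_of_all _ fun q => mul_nonneg (hk0 _ _) (hk0 _ _)), ← hp, ENNReal.toReal_ofReal (hK0 _ _)]
    · ring
    · exact ((hk.comp (measurable_id.prodMk measurable_const)).mul
        (hk.comp (measurable_id.prodMk measurable_const))).aestronglyMeasurable
  have e3 : ∫ p : X × X, ∫ q, (k q p.1 * f p.1) * (k q p.2 * f p.2) ∂ν ∂(μ.prod μ) =
      ∫ q, (∫ x, k q x * f x ∂μ) * (∫ x, k q x * f x ∂μ) ∂ν := by
    rw [integral_integral_swap hGi]
    congr 1
    ext q
    exact integral_prod_mul (fun x => k q x * f x) (fun x => k q x * f x)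
  have hsi : Integrable (fun q => (∫ x, k q x * f x ∂μ) * (∫ x, k q x * f x ∂μ)) ν := by
    have := hGi.integral_prod_right
    refine this.congr (ae_of_all _ fun q => ?_)
    exact integral_prod_mul (fun x => k q x * f x) (fun x => k q x * f x)
  rw [e1, e2, e3] at hle
  have h0 : ∫ q, (∫ x, k q x * f x ∂μ) * (∫ x, k q x * f x ∂μ) ∂ν = 0 :=
    le_antisymm hle (integral_nonneg fun q => mul_self_nonneg _)
  rw [integral_eq_zero_iff_of_nonneg (fun q => mul_self_nonneg _) hsi] at h0
  filter_upwards [h0] with q hq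
  exact mul_self_eq_zero.1 hq

lemma bp_K1_nonneg (x : E3) : 0 ≤ K1 x := by
  unfold K1
  split_ifs
  · norm_num
  · have : Real.exp (-‖x‖) ≤ 1 := by
      rw [Real.exp_le_one_iff]; linarith [norm_nonneg x]
    exact div_nonneg (by linarith) (norm_nonneg x)

lemma bp_K1_lower (x : E3) : 1 ≤ K1 x * (1 + ‖x‖) := by
  unfold K1
  split_ifs with h
  · linarith [norm_nonneg x]
  · have hx : 0 < ‖x‖ := norm_pos_iff.2 h
    have h1 : ‖x‖ + 1 ≤ Real.exp ‖x‖ := Real.add_one_le_exp _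
    have h2 : Real.exp (-‖x‖) * (1 + ‖x‖) ≤ 1 := by
      rw [Real.exp_neg, inv_mul_le_iff₀ (Real.exp_pos _)]
      linarith
    rw [div_mul_eq_mul_div, le_div_iff₀ hx]
    linarith

lemma bp_K1_meas : Measurable K1 := by
  unfold K1
  exact Measurable.ite (measurableSet_singleton 0) measurable_const (by fun_prop)

lemma bp_parallelogram (x y z : E3) :
    ‖x - z‖ ^ 2 + ‖y - z‖ ^ 2 = ‖x - y‖ ^ 2 / 2 + 2 * ‖z - (1 / 2 : ℝ) • (x + y)‖ ^ 2 := by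
  have h := parallelogram_law_with_norm ℝ (x - z) (y - z)
  have h1 : (x - z) + (y - z) = (-2 : ℝ) • (z - (1 / 2 : ℝ) • (x + y)) := by module
  have h2 : (x - z) - (y - z) = x - y := by abel
  rw [h1, h2, norm_smul] at h
  rw [Real.norm_eq_abs, show |(-2:ℝ)| = 2 by norm_num] at h
  nlinarith

/-- normalisation -/
def bpC (u : ℝ) : ℝ := (π / (4 * u ^ 2)) ^ (3 / 2 : ℝ)

/-- square root kernel -/
def bpk (q : ℝ × E3) (x : E3) : ℝ :=
  √(bpw q.1 / bpC q.1) * Real.exp (-(2 * q.1 ^ 2) * ‖x - q.2‖ ^ 2)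

lemma bpC_pos {u : ℝ} (hu : 0 < u) : 0 < bpC u := by
  unfold bpC; positivity

lemma bpw_pos {u : ℝ} (hu : 0 < u) : 0 < bpw u := by
  have : Real.exp (-(1 / 2 / u) ^ 2) < 1 := by
    rw [Real.exp_lt_one_iff]
    have : 0 < (1 / 2 / u) ^ 2 := by positivity
    linarith
  have h2 : 0 < 1 - Real.exp (-(1 / 2 / u) ^ 2) := by linarith
  unfold bpw; positivity

lemma bpk_meas : Measurable (Function.uncurry bpk) := by
  unfold Function.uncurry bpk bpw bpC
  fun_prop

lemma bpk_nonneg (q : ℝ × E3) (x : E3) : 0 ≤ bpk q x := by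
  unfold bpk; positivity

lemma bp_inner (u : ℝ) (hu : 0 < u) (x y : E3) :
    ∫⁻ z, ENNReal.ofReal (bpk (u, z) x * bpk (u, z) y) =
      ENNReal.ofReal (bpw u * Real.exp (-u ^ 2 * ‖x - y‖ ^ 2)) := by
  have hw := bpw_pos hu
  have hC := bpC_pos hu
  have h1 : ∀ z, bpk (u, z) x * bpk (u, z) y =
      (bpw u / bpC u * Real.exp (-u ^ 2 * ‖x - y‖ ^ 2)) *
        (fun z : E3 => Real.exp (-(4 * u ^ 2) * ‖z‖ ^ 2)) (z - (1 / 2 : ℝ) • (x + y)) := by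
    intro z
    have hs : √(bpw u / bpC u) * √(bpw u / bpC u) = bpw u / bpC u :=
      Real.mul_self_sqrt (by positivity)
    have he : Real.exp (-(2 * u ^ 2) * ‖x - z‖ ^ 2) * Real.exp (-(2 * u ^ 2) * ‖y - z‖ ^ 2) =
        Real.exp (-u ^ 2 * ‖x - y‖ ^ 2) *
          Real.exp (-(4 * u ^ 2) * ‖z - (1 / 2 : ℝ) • (x + y)‖ ^ 2) := by
      rw [← Real.exp_add, ← Real.exp_add]
      congr 1
      have := bp_parallelogram x y z
      linear_combination (-(2 * u ^ 2)) * this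
    simp only [bpk]
    rw [mul_assoc (bpw u / bpC u), ← he]
    nth_rewrite 3 [← hs]
    ring
  have h4 : 0 < 4 * u ^ 2 := by positivity
  have hI := GaussianFourier.integral_rexp_neg_mul_sq_norm (V := E3) h4
  have hfr : (Module.finrank ℝ E3 / 2 : ℝ) = 3 / 2 := by simp
  rw [hfr] at hI
  change _ = bpC u at hI
  have hintg : Integrable (fun z : E3 => Real.exp (-(4 * u ^ 2) * ‖z‖ ^ 2)) := by
    by_contra hcon
    rw [integral_undef hcon] at hI
    linarith
  simp_rw [h1]
  rw [← ofReal_integral_eq_lintegral_ofReal]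
  · rw [integral_const_mul,
      integral_sub_right_eq_self (fun z : E3 => Real.exp (-(4 * u ^ 2) * ‖z‖ ^ 2)), hI]
    congr 1
    field_simp
  · exact (hintg.comp_sub_right _).const_mul _
  · exact ae_of_all _ fun z => by
      simp only [Pi.zero_apply]
      positivity

lemma bp_K1_repr (x y : E3) (hxy : x ≠ y) :
    ENNReal.ofReal (K1 (x - y)) =
      ∫⁻ q, ENNReal.ofReal (bpk q x * bpk q y)
        ∂((volume.restrict (Set.Ioi (0:ℝ))).prod (volume : Measure E3)) := by
  have hm : ∀ x : E3, Measurable (fun q => bpk q x) := by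
    intro x
    unfold bpk bpw bpC
    fun_prop
  have hmm : Measurable (fun q => ENNReal.ofReal (bpk q x * bpk q y)) :=
    ((hm x).mul (hm y)).ennreal_ofReal
  rw [lintegral_prod _ hmm.aemeasurable]
  rw [setLIntegral_congr_fun measurableSet_Ioi (fun u hu => bp_inner u hu x y)]
  have h : x - y ≠ 0 := sub_ne_zero.2 hxy
  rw [← bp_kernel _ (norm_pos_iff.2 h), K1, if_neg h]

lemma bp_diag : ∀ᵐ p ∂((volume : Measure E3).prod (volume : Measure E3)), p.1 ≠ p.2 := by
  have hms : MeasurableSet {p : E3 × E3 | p.1 ≠ p.2} :=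
    (measurableSet_eq_fun measurable_fst measurable_snd).compl
  refine (Measure.ae_prod_mem_iff_ae_ae_mem hms).2 (ae_of_all _ fun x => ?_)
  have : ∀ᵐ y ∂(volume : Measure E3), y ≠ x := by
    simp [ae_iff]
  filter_upwards [this] with y hy
  exact hy.symm

/-- Gaussian bound by the kernel -/
lemma bp_gauss_bound (a : ℝ) (ha : 0 < a) (x z y : E3) :
    Real.exp (-a * ‖y - z‖ ^ 2) ≤ (2 + 1 / a + ‖x - z‖) * K1 (x - y) := by
  have hK := bp_K1_lower (x - y)
  have hK0 := bp_K1_nonneg (x - y)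
  set ρ := ‖y - z‖ with hρ
  have hρ0 : 0 ≤ ρ := norm_nonneg _
  have hd0 : 0 ≤ ‖x - z‖ := norm_nonneg _
  have htri : ‖x - y‖ ≤ ‖x - z‖ + ρ := by
    have : x - y = (x - z) - (y - z) := by abel
    rw [this]; exact norm_sub_le _ _
  set e := Real.exp (-a * ρ ^ 2) with he
  have he0 : 0 < e := Real.exp_pos _
  have he1 : e ≤ 1 := by
    rw [he, Real.exp_le_one_iff]; nlinarith [mul_nonneg ha.le (sq_nonneg ρ)]
  have he2 : e * (1 + a * ρ ^ 2) ≤ 1 := by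
    have := Real.add_one_le_exp (a * ρ ^ 2)
    rw [he, neg_mul, Real.exp_neg, inv_mul_le_iff₀ (Real.exp_pos _)]
    linarith
  have he3 : e * ρ ≤ 1 + 1 / a := by
    have h1 : ρ ≤ 1 + ρ ^ 2 := by nlinarith [sq_nonneg (ρ - 1)]
    have h2 : e * ρ ^ 2 ≤ 1 / a := by
      rw [le_div_iff₀ ha]; nlinarith
    nlinarith
  have h5 : e * (1 + ‖x - y‖) ≤ 2 + 1 / a + ‖x - z‖ := by
    nlinarith
  calc e ≤ e * (K1 (x - y) * (1 + ‖x - y‖)) := by nlinarith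
    _ = (e * (1 + ‖x - y‖)) * K1 (x - y) := by ring
    _ ≤ _ := by gcongr

open ProbabilityTheory in
/-- Uniqueness: a function all of whose Laplace integrals vanish is zero. -/
lemma bp_unique (g : E3 → ℝ) (hg : Measurable g)
    (hi : ∀ w : E3, Integrable (fun x => Real.exp (inner ℝ x w) * g x))
    (h0 : ∀ w : E3, ∫ x, Real.exp (inner ℝ x w) * g x = 0) : g =ᵐ[volume] 0 := by
  set gp : E3 → NNReal := fun x => (g x).toNNReal with hgp
  set gm : E3 → NNReal := fun x => (-g x).toNNReal with hgm
  have mp : Measurable gp := hg.real_toNNReal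
  have mm : Measurable gm := hg.neg.real_toNNReal
  set μ : Measure E3 := volume.withDensity (fun x => (gp x : ℝ≥0∞)) with hμ
  set ν : Measure E3 := volume.withDensity (fun x => (gm x : ℝ≥0∞)) with hν
  have ip : ∀ w : E3, Integrable (fun x => (gp x : ℝ) • Real.exp (inner ℝ x w)) := by
    intro w
    refine (hi w).mono (Measurable.aestronglyMeasurable (by fun_prop)) (ae_of_all _ fun x => ?_)
    rw [norm_smul, norm_mul, mul_comm]
    gcongr
    simp only [hgp, Real.coe_toNNReal', Real.norm_eq_abs]
    rw [abs_of_nonneg (le_max_right _ _)]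
    exact max_le (le_abs_self _) (abs_nonneg _)
  have im : ∀ w : E3, Integrable (fun x => (gm x : ℝ) • Real.exp (inner ℝ x w)) := by
    intro w
    refine (hi w).mono (Measurable.aestronglyMeasurable (by fun_prop)) (ae_of_all _ fun x => ?_)
    rw [norm_smul, norm_mul, mul_comm]
    gcongr
    simp only [hgm, Real.coe_toNNReal', Real.norm_eq_abs]
    rw [abs_of_nonneg (le_max_right _ _)]
    exact max_le (neg_le_abs _) (abs_nonneg _)
  have jp : ∀ w : E3, Integrable (fun x => Real.exp (inner ℝ x w)) μ := fun w =>
    (integrable_withDensity_iff_integrable_coe_smul mp).2 (ip w)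
  have jm : ∀ w : E3, Integrable (fun x => Real.exp (inner ℝ x w)) ν := fun w =>
    (integrable_withDensity_iff_integrable_coe_smul mm).2 (im w)
  have heq : ∀ w : E3, ∫ x, Real.exp (inner ℝ x w) ∂μ = ∫ x, Real.exp (inner ℝ x w) ∂ν := by
    intro w
    rw [hμ, hν, integral_withDensity_eq_integral_smul mp, integral_withDensity_eq_integral_smul mm,
      ← sub_eq_zero]
    have := integral_sub (ip w) (im w)
    change (∫ x, (gp x : ℝ) • Real.exp (inner ℝ x w)) - ∫ x, (gm x : ℝ) • Real.exp (inner ℝ x w) = 0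
    rw [← this, ← h0 w]
    congr 1
    ext x
    have : (gp x : ℝ) - (gm x : ℝ) = g x := by
      simp only [hgp, hgm, Real.coe_toNNReal']
      rcases le_total 0 (g x) with h | h
      · rw [max_eq_left h, max_eq_right (by linarith)]; ring
      · rw [max_eq_right h, max_eq_left (by linarith)]; ring
    rw [smul_eq_mul, smul_eq_mul, ← sub_mul, this, mul_comm]
  have fp : IsFiniteMeasure μ := by
    have := jp 0
    simp only [inner_zero_right, Real.exp_zero] at this
    exact (integrable_const_iff_isFiniteMeasure one_ne_zero).1 this
  have fm : IsFiniteMeasure ν := by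
    have := jm 0
    simp only [inner_zero_right, Real.exp_zero] at this
    exact (integrable_const_iff_isFiniteMeasure one_ne_zero).1 this
  have hz : μ = 0 ↔ ν = 0 := by
    have := heq 0
    simp only [inner_zero_right, Real.exp_zero, integral_const, smul_eq_mul, mul_one] at this
    rw [← Measure.measure_univ_eq_zero, ← Measure.measure_univ_eq_zero, ← measureReal_eq_zero_iff,
      ← measureReal_eq_zero_iff, this]
  have hμν : μ = ν := by
    apply Measure.ext_of_charFun
    ext w
    have hset : integrableExpSet (fun x : E3 => inner ℝ x w) μ = Set.univ := by
      ext t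
      simp only [integrableExpSet, Set.mem_ofPred_eq, Set.mem_univ, iff_true]
      have := jp (t • w)
      simpa only [inner_smul_right] using this
    have hmgf : mgf (fun x : E3 => inner ℝ x w) μ = mgf (fun x : E3 => inner ℝ x w) ν := by
      ext t
      have := heq (t • w)
      simpa only [inner_smul_right, mgf] using this
    have := eqOn_complexMGF_of_mgf' hmgf hz (x := Complex.I) (by rw [hset]; simp)
    simp only [complexMGF] at this
    simp only [charFun_apply]
    simpa only [mul_comm] using this
  have hd := (withDensity_eq_iff_of_sigmaFinite (μ := (volume : Measure E3))
    mp.coe_nnreal_ennreal.aemeasurable mm.coe_nnreal_ennreal.aemeasurable).1 hμν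
  filter_upwards [hd] with x hx
  have hx' : gp x = gm x := by exact_mod_cast hx
  have hx2 : ((gp x : ℝ)) = gm x := by rw [hx']
  simp only [hgp, hgm, Real.coe_toNNReal'] at hx2
  rcases le_total 0 (g x) with h | h
  · rw [max_eq_left h, max_eq_right (by linarith)] at hx2; exact hx2
  · rw [max_eq_right h, max_eq_left (by linarith)] at hx2; simp only [Pi.zero_apply]; linarith

/-- Strict positivity of the Bopp–Podolsky energy on its finiteness domain:
if `f` is measurable, not a.e. zero, and `V(|f|,|f|) < ∞`, then `V(f,f) > 0`. -/
theorem energy_pos (f : E3 → ℝ) (hf : Measurable f) (hf0 : ¬ (f =ᵐ[volume] 0))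
    (hV : Vlin (fun x => |f x|) (fun x => |f x|) < ⊤) :
    0 < Vr f f := by
  by_contra hcon
  apply hf0
  have hKm : Measurable (Function.uncurry fun x y : E3 => K1 (x - y)) :=
    bp_K1_meas.comp (measurable_fst.sub measurable_snd)
  have hae := bp_abstract (volume : Measure E3)
    ((volume.restrict (Set.Ioi (0:ℝ))).prod (volume : Measure E3)) bpk bpk_meas bpk_nonneg
    (fun x y => K1 (x - y)) (fun x y => bp_K1_nonneg _) hKm
    (by filter_upwards [bp_diag] with p hp using bp_K1_repr p.1 p.2 hp) f hf hV (not_lt.1 hcon)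
  have hae2 := Measure.ae_ae_of_ae_prod hae
  rw [ae_restrict_iff' measurableSet_Ioi] at hae2
  obtain ⟨u, hu, hz⟩ : ∃ u : ℝ, 0 < u ∧ ∀ᵐ z : E3, ∫ x, bpk (u, z) x * f x = 0 := by
    by_contra hno
    have : ∀ᵐ u : ℝ, u ∉ Set.Ioi (0:ℝ) := by
      filter_upwards [hae2] with u h hu
      exact hno ⟨u, hu, h hu⟩
    have h2 : volume (Set.Ioi (0:ℝ)) = 0 := by
      rw [ae_iff] at this
      simp only [not_not] at this
      exact this
    rw [Real.volume_Ioi] at h2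
    exact ENNReal.top_ne_zero h2
  set a : ℝ := 2 * u ^ 2 with ha
  have ha0 : 0 < a := by positivity
  have hz' : ∀ᵐ z : E3, ∫ x, Real.exp (-a * ‖x - z‖ ^ 2) * f x = 0 := by
    filter_upwards [hz] with z h
    simp only [bpk, mul_assoc] at h
    rw [integral_const_mul] at h
    have : 0 < √(bpw u / bpC u) := Real.sqrt_pos.2 (div_pos (bpw_pos hu) (bpC_pos hu))
    simpa only [ha, neg_mul, mul_assoc] using (mul_eq_zero.1 h).resolve_left this.ne'
  obtain ⟨x₀, hx₀, hfin⟩ : ∃ x₀ : E3, f x₀ ≠ 0 ∧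
      ∫⁻ y, ENNReal.ofReal (K1 (x₀ - y) * |f x₀| * |f y|) < ⊤ := by
    by_contra hno
    push Not at hno
    apply hf0
    have hm : Measurable fun x : E3 => ∫⁻ y, ENNReal.ofReal (K1 (x - y) * |f x| * |f y|) := by
      apply Measurable.lintegral_prod_right'
        (f := fun p : E3 × E3 => ENNReal.ofReal (K1 (p.1 - p.2) * |f p.1| * |f p.2|))
      have hKm' : Measurable (fun p : E3 × E3 => K1 (p.1 - p.2)) := hKm
      fun_prop
    filter_upwards [ae_lt_top hm hV.ne] with x hx
    by_contra hne
    exact absurd hx (not_lt.2 (hno x hne))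
  have hKx : Measurable (fun y : E3 => K1 (x₀ - y)) :=
    bp_K1_meas.comp (measurable_const.sub measurable_id)
  have hbase : Integrable (fun y => K1 (x₀ - y) * |f y|) := by
    have h1 : Integrable (fun y => K1 (x₀ - y) * |f x₀| * |f y|) := by
      refine ⟨Measurable.aestronglyMeasurable (by fun_prop), ?_⟩
      rw [hasFiniteIntegral_iff_ofReal]
      · exact hfin
      · exact ae_of_all _ fun y =>
          mul_nonneg (mul_nonneg (bp_K1_nonneg _) (abs_nonneg _)) (abs_nonneg _)
    have h2 := h1.const_mul (|f x₀|⁻¹)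
    refine h2.congr (ae_of_all _ fun y => ?_)
    have : |f x₀| ≠ 0 := abs_ne_zero.2 hx₀
    field_simp
  have hbd : ∀ z y : E3, ‖Real.exp (-a * ‖y - z‖ ^ 2) * f y‖ ≤
      (2 + 1 / a + ‖x₀ - z‖) * (K1 (x₀ - y) * |f y|) := by
    intro z y
    rw [norm_mul, Real.norm_eq_abs, Real.abs_exp, Real.norm_eq_abs, ← mul_assoc]
    exact mul_le_mul_of_nonneg_right (bp_gauss_bound a ha0 x₀ z y) (abs_nonneg _)
  have hgi : ∀ z : E3, Integrable (fun y => Real.exp (-a * ‖y - z‖ ^ 2) * f y) := fun z =>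
    Integrable.mono' (hbase.const_mul _) (Measurable.aestronglyMeasurable (by fun_prop))
      (ae_of_all _ (hbd z))
  have hcont : Continuous (fun z : E3 => ∫ y, Real.exp (-a * ‖y - z‖ ^ 2) * f y) := by
    rw [continuous_iff_continuousAt]
    intro z₀
    refine continuousAt_of_dominated
      (bound := fun y => (2 + 1 / a + (‖x₀ - z₀‖ + 1)) * (K1 (x₀ - y) * |f y|))
      (Filter.Eventually.of_forall fun z => (hgi z).aestronglyMeasurable) ?_
      (hbase.const_mul _) (ae_of_all _ fun y => by fun_prop)
    filter_upwards [Metric.ball_mem_nhds z₀ one_pos] with z hz1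
    refine ae_of_all _ fun y => (hbd z y).trans ?_
    have h1 : ‖x₀ - z‖ ≤ ‖x₀ - z₀‖ + 1 := by
      have h2 : x₀ - z = (x₀ - z₀) - (z - z₀) := by abel
      rw [h2]
      have h3 : ‖z - z₀‖ < 1 := by rwa [← dist_eq_norm]
      exact (norm_sub_le _ _).trans (by linarith)
    have h4 : 0 ≤ K1 (x₀ - y) * |f y| := mul_nonneg (bp_K1_nonneg _) (abs_nonneg _)
    gcongr
  have hzero : (fun z : E3 => ∫ y, Real.exp (-a * ‖y - z‖ ^ 2) * f y) = fun _ => 0 :=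
    (hcont.ae_eq_iff_eq volume continuous_const).1 hz'
  have hexp : ∀ w y : E3, Real.exp (inner ℝ y w) * (Real.exp (-a * ‖y‖ ^ 2) * f y) =
      Real.exp (a * ‖(1 / (2 * a)) • w‖ ^ 2) *
        (Real.exp (-a * ‖y - (1 / (2 * a)) • w‖ ^ 2) * f y) := by
    intro w y
    rw [← mul_assoc, ← mul_assoc, ← Real.exp_add, ← Real.exp_add]
    congr 2
    rw [norm_sub_sq_real, inner_smul_right]
    field_simp
    ring
  have huq := bp_unique (fun y => Real.exp (-a * ‖y‖ ^ 2) * f y) (by fun_prop)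
    (fun w => by
      simp_rw [hexp w]
      exact (hgi _).const_mul _)
    (fun w => by
      simp_rw [hexp w]
      rw [integral_const_mul, congrFun hzero, mul_zero])
  filter_upwards [huq] with y hy
  exact (mul_eq_zero.1 hy).resolve_left (Real.exp_pos _).ne'
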